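/- There exists a constant C > 0 such that for all t ∈ (0, 1/4], |∑_p (p^{-1/2-t} − p^{-1/2-2t})² − (log(1/(2t)) + log(1/(4t)) − 2·log(1/(3t)))| ≤ C·t, where the sum runs over all primes. In particular, ∑_p (p^{-1/2-t} − p^{-1/2-2t})² → log(9/8) as t → 0⁺. -/

import Mathlib

open Filter Topology

/-!
Write `P s = ∑ₚ p⁻ˢ`. Expanding the square turns the sum over primes into
`P (1 + 2x) + P (1 + 2y) - 2 P (1 + x + y)`, with `x = t` and `y = 2t`. By the Euler product,
`P s = log ζ(s) - R s`, where `R` collects the higher prime powers. The integral test gives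
`1 / u ≤ ζ(1 + u) ≤ 1 + 1 / u`, so `log ζ(1 + u) = -log u + O(u)` uniformly in `u > 0`, while `R` is
Lipschitz on `[1, ∞)`. Hence `P (1 + u) = -log u - R 1 + O(u)`, and the constant `R 1` cancels.
-/

section Zeta

lemma riemannZeta_re_eq_tsum {s : ℝ} (hs : 1 < s) :
    (riemannZeta s).re = ∑' n : ℕ, ((n + 1 : ℕ) : ℝ) ^ (-s) := by
  have hterm (n : ℕ) : 1 / ((n : ℂ) + 1) ^ (s : ℂ) = (((n + 1 : ℕ) : ℝ) ^ (-s) : ℝ) := by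
    rw [Complex.ofReal_cpow (by positivity), Complex.ofReal_neg, Complex.cpow_neg, one_div]
    push_cast
    rfl
  rw [zeta_eq_tsum_one_div_nat_add_one_cpow (by simpa using hs), tsum_congr hterm,
    ← Complex.ofReal_tsum, Complex.ofReal_re]

lemma integral_Ioi_one_rpow_neg {s : ℝ} (hs : 1 < s) :
    ∫ x in Set.Ioi ((1 : ℕ) : ℝ), x ^ (-s) = 1 / (s - 1) := by
  rw [Nat.cast_one, integral_Ioi_rpow_of_lt (by linarith) one_pos, Real.one_rpow,
    ← neg_div_neg_eq]
  ring_nf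

lemma antitoneOn_rpow_neg_Ici_one {s : ℝ} (hs : 0 ≤ s) :
    AntitoneOn (fun x : ℝ => x ^ (-s)) (Set.Ici ((1 : ℕ) : ℝ)) :=
  (Real.antitoneOn_rpow_Ioi_of_exponent_nonpos (by linarith)).mono
    (Set.Ici_subset_Ioi.2 (by simp))

lemma one_div_sub_one_le_riemannZeta_re {s : ℝ} (hs : 1 < s) :
    1 / (s - 1) ≤ (riemannZeta s).re := by
  rw [riemannZeta_re_eq_tsum hs, ← integral_Ioi_one_rpow_neg hs]
  exact (antitoneOn_rpow_neg_Ici_one (by linarith)).integral_le_tsum_comp_add 1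
    (Real.summable_nat_rpow.2 (by linarith)) fun x hx =>
      Real.rpow_nonneg ((Nat.cast_nonneg 1).trans (le_of_lt hx)) _

lemma riemannZeta_re_le_one_add {s : ℝ} (hs : 1 < s) :
    (riemannZeta s).re ≤ 1 + 1 / (s - 1) := by
  have hsum : Summable fun n : ℕ => ((n + 1 : ℕ) : ℝ) ^ (-s) :=
    (summable_nat_add_iff 1).2 (Real.summable_nat_rpow.2 (by linarith))
  rw [riemannZeta_re_eq_tsum hs, ← integral_Ioi_one_rpow_neg hs, hsum.tsum_eq_zero_add]
  gcongr
  · simp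
  · exact (antitoneOn_rpow_neg_Ici_one (by linarith)).tsum_comp_add_le_integral 1
      (integrableOn_Ioi_rpow_of_lt (by linarith) (by simp)) fun x hx =>
        Real.rpow_nonneg ((Nat.cast_nonneg 1).trans (le_of_lt hx)) _

lemma abs_log_riemannZeta_re_add_log_le {s : ℝ} (hs : 1 < s) :
    |Real.log (riemannZeta s).re + Real.log (s - 1)| ≤ s - 1 := by
  have hs' : 0 < s - 1 := sub_pos.2 hs
  have hlower := one_div_sub_one_le_riemannZeta_re hs
  have hζ : 0 < (riemannZeta s).re := (one_div_pos.2 hs').trans_le hlower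
  have hone : 1 ≤ (riemannZeta s).re * (s - 1) := (div_le_iff₀ hs').1 hlower
  have hle : (riemannZeta s).re * (s - 1) ≤ s := by
    calc (riemannZeta s).re * (s - 1) ≤ (1 + 1 / (s - 1)) * (s - 1) := by
          gcongr; exact riemannZeta_re_le_one_add hs
      _ = s := by field_simp; ring
  rw [← Real.log_mul hζ.ne' hs'.ne', abs_of_nonneg (Real.log_nonneg hone)]
  exact (Real.log_le_sub_one_of_pos (by linarith)).trans (by linarith)

end Zeta

section PrimeZeta

/-- The prime zeta function `P s = ∑ₚ p⁻ˢ` at a real argument; it takes the junk value `0` for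
`s ≤ 1`, where the series diverges. -/
noncomputable def primeZeta (s : ℝ) : ℝ := ∑' p : Nat.Primes, (p : ℝ) ^ (-s)

/-- The tail `∑_{k ≥ 2} xᵏ / k` of the series of `-log (1 - x)`, in closed form. -/
noncomputable def logTail (x : ℝ) : ℝ := -Real.log (1 - x) - x

/-- The contribution `∑ₚ ∑_{k ≥ 2} p⁻ᵏˢ / k` of the proper prime powers to `log ζ(s)`. -/
noncomputable def primePowerTail (s : ℝ) : ℝ := ∑' p : Nat.Primes, logTail ((p : ℝ) ^ (-s))

lemma abs_logTail_sub_le {b x y : ℝ} (hb : b < 1) (hx : x ∈ Set.Icc 0 b) (hy : y ∈ Set.Icc 0 b) :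
    |logTail x - logTail y| ≤ b / (1 - b) * |x - y| := by
  have hderiv : ∀ z ∈ Set.Icc 0 b,
      HasDerivWithinAt logTail (z / (1 - z)) (Set.Icc 0 b) z := fun z hz => by
    have hz_ne : 1 - z ≠ 0 := by linarith [hz.2]
    have hlog := ((hasDerivAt_id z).const_sub 1).log hz_ne
    convert! (hlog.neg.sub (hasDerivAt_id z)).hasDerivWithinAt using 1
    simp only [id_eq]
    field_simp
    ring
  refine (convex_Icc 0 b).norm_image_sub_le_of_norm_hasDerivWithin_le hderiv (fun z hz => ?_) hy hx
  rw [Real.norm_of_nonneg (div_nonneg hz.1 (by linarith [hz.2]))]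
  gcongr <;> linarith [hz.1, hz.2]

lemma abs_logTail_sub_le_two_mul {b x y : ℝ} (hb : b ≤ 1 / 2) (hx : x ∈ Set.Icc 0 b)
    (hy : y ∈ Set.Icc 0 b) : |logTail x - logTail y| ≤ 2 * b * |x - y| := by
  refine (abs_logTail_sub_le (by linarith) hx hy).trans ?_
  gcongr
  rw [div_le_iff₀ (by linarith)]
  nlinarith [hx.1.trans hx.2]

lemma abs_rpow_neg_sub_rpow_neg_le {x a s r : ℝ} (hx : 1 ≤ x) (hs : a ≤ s) (hr : a ≤ r) :
    |x ^ (-s) - x ^ (-r)| ≤ Real.log x * x ^ (-a) * |s - r| := by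
  have hderiv : ∀ u ∈ Set.Ici a, HasDerivWithinAt (fun v : ℝ => x ^ (-v))
      (Real.log x * -1 * x ^ (-u)) (Set.Ici a) u := fun u _ =>
    ((hasDerivAt_id u).neg.const_rpow (by linarith)).hasDerivWithinAt
  refine (convex_Ici a).norm_image_sub_le_of_norm_hasDerivWithin_le hderiv (fun u hu => ?_) hr hs
  have hlog : 0 ≤ Real.log x := Real.log_nonneg hx
  rw [mul_neg_one, neg_mul, norm_neg, Real.norm_of_nonneg (by positivity)]
  gcongr
  exact hu

lemma rpow_neg_mem_Icc {x s : ℝ} (hx : 1 ≤ x) (hs : 1 ≤ s) : x ^ (-s) ∈ Set.Icc 0 x⁻¹ := by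
  refine ⟨by positivity, ?_⟩
  rw [← Real.rpow_neg_one]
  exact Real.rpow_le_rpow_of_exponent_le hx (by linarith)

lemma summable_log_mul_rpow_neg {s : ℝ} (hs : 1 < s) :
    Summable fun n : ℕ => Real.log n * (n : ℝ) ^ (-s) := by
  have hε : 0 < (s - 1) / 2 := by linarith
  have hmajorant : Summable fun n : ℕ => (n : ℝ) ^ (-((s + 1) / 2)) / ((s - 1) / 2) :=
    (Real.summable_nat_rpow.2 (by linarith)).div_const _
  refine hmajorant.of_nonneg_of_le (fun n => by positivity) fun n => ?_
  calc Real.log n * (n : ℝ) ^ (-s)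
      ≤ (n : ℝ) ^ ((s - 1) / 2) / ((s - 1) / 2) * (n : ℝ) ^ (-s) := by
        gcongr; exact Real.log_le_rpow_div n.cast_nonneg hε
    _ = (n : ℝ) ^ (-((s + 1) / 2)) / ((s - 1) / 2) := by
        rw [div_mul_eq_mul_div, ← Real.rpow_add' n.cast_nonneg (by linarith)]
        ring_nf

lemma two_le_cast_prime (p : Nat.Primes) : (2 : ℝ) ≤ p := mod_cast p.2.two_le

lemma inv_cast_prime_le_half (p : Nat.Primes) : (p : ℝ)⁻¹ ≤ 1 / 2 := by
  simpa using inv_anti₀ two_pos (two_le_cast_prime p)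

lemma summable_logTail_prime_rpow_neg {s : ℝ} (hs : 1 ≤ s) :
    Summable fun p : Nat.Primes => logTail ((p : ℝ) ^ (-s)) := by
  have hmajorant : Summable fun p : Nat.Primes => 2 * (p : ℝ) ^ (-2 : ℝ) :=
    (Nat.Primes.summable_rpow.2 (by norm_num)).mul_left 2
  refine hmajorant.of_norm_bounded fun p => ?_
  have hmem := rpow_neg_mem_Icc (by linarith [two_le_cast_prime p] : (1 : ℝ) ≤ p) hs
  have hzero : logTail 0 = 0 := by simp [logTail]
  calc ‖logTail ((p : ℝ) ^ (-s))‖ ≤ 2 * (p : ℝ)⁻¹ * (p : ℝ) ^ (-s) := by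
        simpa [hzero, abs_of_nonneg hmem.1] using
          abs_logTail_sub_le_two_mul (inv_cast_prime_le_half p) hmem (y := 0)
            ⟨le_rfl, by positivity⟩
    _ ≤ 2 * (p : ℝ)⁻¹ * (p : ℝ)⁻¹ := by gcongr; exact hmem.2
    _ = 2 * (p : ℝ) ^ (-2 : ℝ) := by
        rw [Real.rpow_neg (Nat.cast_nonneg _), Real.rpow_two]
        ring

lemma exists_lipschitzOnWith_primePowerTail :
    ∃ K, LipschitzOnWith K primePowerTail (Set.Ici 1) := by
  have hsum : Summable fun p : Nat.Primes => 2 * (Real.log p * (p : ℝ) ^ (-2 : ℝ)) :=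
    ((summable_log_mul_rpow_neg one_lt_two).comp_injective Subtype.val_injective).mul_left 2
  refine ⟨_, LipschitzOnWith.of_dist_le'
    (K := ∑' p : Nat.Primes, 2 * (Real.log p * (p : ℝ) ^ (-2 : ℝ))) fun s hs r hr => ?_⟩
  rw [Real.dist_eq, Real.dist_eq, primePowerTail, primePowerTail,
    ← (summable_logTail_prime_rpow_neg hs).tsum_sub (summable_logTail_prime_rpow_neg hr),
    ← Real.norm_eq_abs]
  refine tsum_of_norm_bounded (hsum.hasSum.mul_right |s - r|) fun p => ?_
  have hp : (1 : ℝ) ≤ p := by linarith [two_le_cast_prime p]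
  calc ‖logTail ((p : ℝ) ^ (-s)) - logTail ((p : ℝ) ^ (-r))‖
      ≤ 2 * (p : ℝ)⁻¹ * |(p : ℝ) ^ (-s) - (p : ℝ) ^ (-r)| :=
        abs_logTail_sub_le_two_mul (inv_cast_prime_le_half p) (rpow_neg_mem_Icc hp hs)
          (rpow_neg_mem_Icc hp hr)
    _ ≤ 2 * (p : ℝ)⁻¹ * (Real.log p * (p : ℝ) ^ (-1 : ℝ) * |s - r|) := by
        gcongr; exact abs_rpow_neg_sub_rpow_neg_le hp hs hr
    _ = 2 * (Real.log p * (p : ℝ) ^ (-2 : ℝ)) * |s - r| := by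
        rw [Real.rpow_neg_one, Real.rpow_neg (by linarith), Real.rpow_two]
        ring

lemma log_riemannZeta_re_eq_primeZeta_add_primePowerTail {s : ℝ} (hs : 1 < s) :
    Real.log (riemannZeta s).re = primeZeta s + primePowerTail s := by
  have hterm (p : Nat.Primes) : -Complex.log (1 - (p : ℂ) ^ (-(s : ℂ))) =
      (((p : ℝ) ^ (-s) + logTail ((p : ℝ) ^ (-s)) : ℝ) : ℂ) := by
    have hlt : (p : ℝ) ^ (-s) < 1 :=
      Real.rpow_lt_one_of_one_lt_of_neg (by linarith [two_le_cast_prime p]) (by linarith)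
    rw [logTail, add_sub_cancel, Complex.ofReal_neg, Complex.ofReal_log (by linarith),
      Complex.ofReal_sub, Complex.ofReal_cpow (by positivity), Complex.ofReal_one,
      Complex.ofReal_neg, Complex.ofReal_natCast]
  rw [← riemannZeta_eulerProduct_exp_log (by simpa using hs), tsum_congr hterm,
    ← Complex.ofReal_tsum, Complex.exp_ofReal_re, Real.log_exp]
  exact (Nat.Primes.summable_rpow.2 (by linarith)).tsum_add (summable_logTail_prime_rpow_neg hs.le)

lemma exists_abs_primeZeta_one_add_add_log_le :
    ∃ K : ℝ, 0 < K ∧ ∀ u : ℝ, 0 < u →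
      |primeZeta (1 + u) + Real.log u + primePowerTail 1| ≤ K * u := by
  obtain ⟨L, hL⟩ := exists_lipschitzOnWith_primePowerTail
  refine ⟨1 + L, by positivity, fun u hu => ?_⟩
  have hζ := abs_log_riemannZeta_re_add_log_le (s := 1 + u) (by linarith)
  rw [log_riemannZeta_re_eq_primeZeta_add_primePowerTail (by linarith), add_sub_cancel_left] at hζ
  have htail : |primePowerTail (1 + u) - primePowerTail 1| ≤ L * u := by
    simpa [Real.dist_eq, abs_of_pos hu] using
      hL.dist_le_mul (1 + u) (Set.mem_Ici.2 (by linarith)) 1 Set.self_mem_Ici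
  calc |primeZeta (1 + u) + Real.log u + primePowerTail 1|
      = |(primeZeta (1 + u) + primePowerTail (1 + u) + Real.log u)
          - (primePowerTail (1 + u) - primePowerTail 1)| := by ring_nf
    _ ≤ u + L * u := (abs_sub _ _).trans (add_le_add hζ htail)
    _ = (1 + L) * u := by ring

end PrimeZeta

section Variance

lemma tsum_prime_rpow_sub_rpow_sq {x y : ℝ} (hx : 0 < x) (hy : 0 < y) :
    ∑' p : Nat.Primes, ((p : ℝ) ^ (-(1 / 2 : ℝ) - x) - (p : ℝ) ^ (-(1 / 2 : ℝ) - y)) ^ 2 =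
      primeZeta (1 + 2 * x) + primeZeta (1 + 2 * y) - 2 * primeZeta (1 + (x + y)) := by
  have hsum {u : ℝ} (hu : 0 < u) : Summable fun p : Nat.Primes => (p : ℝ) ^ (-(1 + u)) :=
    Nat.Primes.summable_rpow.2 (by linarith)
  have hmul (p : Nat.Primes) (u v : ℝ) : (p : ℝ) ^ (-(1 / 2 : ℝ) - u) * (p : ℝ) ^ (-(1 / 2 : ℝ) - v)
      = (p : ℝ) ^ (-(1 + (u + v))) := by
    rw [← Real.rpow_add (by linarith [two_le_cast_prime p])]
    ring_nf
  have hsq (p : Nat.Primes) :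
      ((p : ℝ) ^ (-(1 / 2 : ℝ) - x) - (p : ℝ) ^ (-(1 / 2 : ℝ) - y)) ^ 2 =
        (p : ℝ) ^ (-(1 + 2 * x)) + (p : ℝ) ^ (-(1 + 2 * y)) - 2 * (p : ℝ) ^ (-(1 + (x + y))) := by
    rw [two_mul x, two_mul y, ← hmul, ← hmul, ← hmul]
    ring
  have hx2 := hsum (mul_pos two_pos hx)
  have hy2 := hsum (mul_pos two_pos hy)
  rw [tsum_congr hsq, (hx2.add hy2).tsum_sub ((hsum (add_pos hx hy)).mul_left 2),
    hx2.tsum_add hy2, tsum_mul_left, primeZeta, primeZeta, primeZeta]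

lemma exists_abs_tsum_prime_rpow_sub_rpow_sq_sub_log_le :
    ∃ C : ℝ, 0 < C ∧ ∀ x y : ℝ, 0 < x → 0 < y →
      |∑' p : Nat.Primes, ((p : ℝ) ^ (-(1 / 2 : ℝ) - x) - (p : ℝ) ^ (-(1 / 2 : ℝ) - y)) ^ 2 -
        (Real.log (1 / (2 * x)) + Real.log (1 / (2 * y)) - 2 * Real.log (1 / (x + y)))|
        ≤ C * (x + y) := by
  obtain ⟨K, hK, hP⟩ := exists_abs_primeZeta_one_add_add_log_le
  refine ⟨4 * K, by positivity, fun x y hx hy => ?_⟩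
  have hPx := abs_le.1 (hP (2 * x) (by positivity))
  have hPy := abs_le.1 (hP (2 * y) (by positivity))
  have hPxy := abs_le.1 (hP (x + y) (by positivity))
  rw [tsum_prime_rpow_sub_rpow_sq hx hy, abs_le]
  simp only [one_div, Real.log_inv]
  constructor <;> linarith [hPx.1, hPx.2, hPy.1, hPy.2, hPxy.1, hPxy.2]

lemma log_one_div_add_log_one_div_sub {a b t : ℝ} (ha : 0 < a) (hb : 0 < b) (ht : 0 < t) :
    Real.log (1 / (2 * a * t)) + Real.log (1 / (2 * b * t)) - 2 * Real.log (1 / ((a + b) * t)) =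
      Real.log ((a + b) ^ 2 / (4 * a * b)) := by
  have hratio : (a + b) ^ 2 / (4 * a * b) = ((a + b) * t) ^ 2 / (2 * a * t * (2 * b * t)) := by
    field_simp
    norm_num
  simp only [one_div, Real.log_inv]
  rw [hratio, Real.log_div (by positivity) (by positivity), Real.log_pow,
    Real.log_mul (x := 2 * a * t) (by positivity) (by positivity)]
  push_cast
  ring

lemma tendsto_of_forall_pos_dist_le_mul {α : Type*} [PseudoMetricSpace α] {f : ℝ → α} {l : α}
    {C : ℝ} (hf : ∀ t, 0 < t → dist (f t) l ≤ C * t) : Tendsto f (𝓝[>] 0) (𝓝 l) := by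
  have hlim : Tendsto (fun t : ℝ => C * t) (𝓝[>] 0) (𝓝 0) := by
    simpa using (continuous_const_mul C).continuousWithinAt.tendsto (x := (0 : ℝ))
  rw [tendsto_iff_dist_tendsto_zero]
  exact squeeze_zero' (.of_forall fun _ => dist_nonneg) (eventually_mem_nhdsWithin.mono hf) hlim

theorem variance_asymptotic_general {a b : ℝ} (ha : 0 < a) (hb : 0 < b) :
    (∃ C : ℝ, 0 < C ∧ ∀ t : ℝ, 0 < t →
      |∑' p : Nat.Primes,
          ((p : ℝ) ^ (-(1 / 2 : ℝ) - a * t) - (p : ℝ) ^ (-(1 / 2 : ℝ) - b * t)) ^ 2 -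
        (Real.log (1 / (2 * a * t)) + Real.log (1 / (2 * b * t)) -
          2 * Real.log (1 / ((a + b) * t)))| ≤ C * t) ∧
    Tendsto (fun t : ℝ => ∑' p : Nat.Primes,
        ((p : ℝ) ^ (-(1 / 2 : ℝ) - a * t) - (p : ℝ) ^ (-(1 / 2 : ℝ) - b * t)) ^ 2)
      (𝓝[>] 0) (𝓝 (Real.log ((a + b) ^ 2 / (4 * a * b)))) := by
  obtain ⟨C, hC, hC_bound⟩ := exists_abs_tsum_prime_rpow_sub_rpow_sq_sub_log_le
  have hbound (t : ℝ) (ht : 0 < t) := hC_bound (a * t) (b * t) (mul_pos ha ht) (mul_pos hb ht)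
  simp only [← add_mul, ← mul_assoc] at hbound
  refine ⟨⟨C * (a + b), by positivity, hbound⟩,
    tendsto_of_forall_pos_dist_le_mul (C := C * (a + b)) fun t ht => ?_⟩
  rw [Real.dist_eq, ← log_one_div_add_log_one_div_sub ha hb ht]
  exact hbound t ht

end Variance

/-- There is a constant `C > 0` such that for all `t ∈ (0, 1/4]`,
`|∑_p (p^{-1/2-t} - p^{-1/2-2t})² - (log(1/(2t)) + log(1/(4t)) - 2 log(1/(3t)))| ≤ C t`;
in particular `∑_p (p^{-1/2-t} - p^{-1/2-2t})² → log(9/8)` as `t → 0⁺`. -/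
theorem variance_asymptotic :
    (∃ C : ℝ, 0 < C ∧ ∀ t : ℝ, 0 < t → t ≤ 1 / 4 →
      |(∑' p : Nat.Primes,
          (((p : ℕ) : ℝ) ^ (-(1 / 2 : ℝ) - t) - ((p : ℕ) : ℝ) ^ (-(1 / 2 : ℝ) - 2 * t)) ^ 2) -
        (Real.log (1 / (2 * t)) + Real.log (1 / (4 * t)) - 2 * Real.log (1 / (3 * t)))|
        ≤ C * t) ∧
    Tendsto (fun t : ℝ => ∑' p : Nat.Primes,
        (((p : ℕ) : ℝ) ^ (-(1 / 2 : ℝ) - t) - ((p : ℕ) : ℝ) ^ (-(1 / 2 : ℝ) - 2 * t)) ^ 2)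
      (𝓝[>] 0) (𝓝 (Real.log (9 / 8))) := by
  obtain ⟨⟨C, hC, hbound⟩, hlim⟩ := variance_asymptotic_general one_pos two_pos
  have hthree : (1 : ℝ) + 2 = 3 := by norm_num
  have hfour : (2 : ℝ) * 2 = 4 := by norm_num
  have hlimit : (3 : ℝ) ^ 2 / (4 * 2) = 9 / 8 := by norm_num
  simp only [one_mul, mul_one, hthree, hfour, hlimit] at hbound hlim
  exact ⟨⟨C, hC, fun t ht _ => hbound t ht⟩, hlim⟩
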